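/- arXiv:2602.10936 — 4 statements merged into one kernel-verified Lean document; each statement's English description precedes it below -/
import Mathlib

section
/- Let A ∈ ℝ^{p×p}, B ∈ ℝ^{p×n_u}, C ∈ ℝ^{n_y×p}, D ∈ ℝ^{n_y×n_u}, K ∈ ℝ^{p×n_y}, and suppose sequences x : ℕ → ℝ^p, u : ℕ → ℝ^{n_u}, y : ℕ → ℝ^{n_y}, ε : ℕ → ℝ^{n_y} satisfy x(s+1) = A x(s) + B u(s) + K ε(s) and y(s) = C x(s) + D u(s) + ε(s) for all s with t ≤ s ≤ t+i. Then, with 𝒜 = A − K C and ℬ = B − K D, the i-step-ahead output satisfies y(t+i) = C 𝒜^i x(t) + D u(t+i) + ε(t+i) + C Σ_{j=0}^{i−1} 𝒜^{i−j−1} ( ℬ u(t+j) + K y(t+j) ). -/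
open Matrix Finset

/-- If the innovations-form state-space equations hold on `t ≤ s ≤ t+i`, then
with `𝒜 = A − KC` and `ℬ = B − KD`, the `i`-step-ahead output satisfies
`y(t+i) = C 𝒜^i x(t) + D u(t+i) + ε(t+i) + C ∑_{j=0}^{i−1} 𝒜^{i−j−1}(ℬ u(t+j) + K y(t+j))`. -/
theorem istep_output_prediction
    (p nu ny : ℕ) (hp : 0 < p) (hnu : 0 < nu) (hny : 0 < ny)
    (A : Matrix (Fin p) (Fin p) ℝ) (B : Matrix (Fin p) (Fin nu) ℝ)
    (C : Matrix (Fin ny) (Fin p) ℝ) (D : Matrix (Fin ny) (Fin nu) ℝ)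
    (K : Matrix (Fin p) (Fin ny) ℝ)
    (x : ℕ → Fin p → ℝ) (u : ℕ → Fin nu → ℝ)
    (y : ℕ → Fin ny → ℝ) (ε : ℕ → Fin ny → ℝ)
    (t i : ℕ)
    (hdyn : ∀ s, t ≤ s → s ≤ t + i →
      x (s + 1) = A *ᵥ x s + B *ᵥ u s + K *ᵥ ε s)
    (hout : ∀ s, t ≤ s → s ≤ t + i →
      y s = C *ᵥ x s + D *ᵥ u s + ε s) :
    y (t + i) = C *ᵥ (((A - K * C) ^ i) *ᵥ x t) + D *ᵥ u (t + i) + ε (t + i) +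
      C *ᵥ (∑ j ∈ Finset.range i,
        ((A - K * C) ^ (i - j - 1)) *ᵥ ((B - K * D) *ᵥ u (t + j) + K *ᵥ y (t + j))) := by
  have key : ∀ k, k ≤ i → x (t + k) = ((A - K * C) ^ k) *ᵥ x t +
      ∑ j ∈ Finset.range k,
        ((A - K * C) ^ (k - j - 1)) *ᵥ ((B - K * D) *ᵥ u (t + j) + K *ᵥ y (t + j)) := by
    intro k
    induction k with
    | zero => intro _; simp
    | succ k ih =>
      intro hk
      have ih' := ih (by omega)
      have h1 : x (t + (k + 1)) =
          (A - K * C) *ᵥ x (t + k) + ((B - K * D) *ᵥ u (t + k) + K *ᵥ y (t + k)) := by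
        rw [← add_assoc, hdyn (t + k) (by omega) (by omega),
          hout (t + k) (by omega) (by omega)]
        simp only [Matrix.sub_mulVec, Matrix.mulVec_add, ← Matrix.mulVec_mulVec]
        abel
      have h2 : ∑ j ∈ Finset.range k, ((A - K * C) ^ (k + 1 - j - 1)) *ᵥ
            ((B - K * D) *ᵥ u (t + j) + K *ᵥ y (t + j)) =
          (A - K * C) *ᵥ ∑ j ∈ Finset.range k, ((A - K * C) ^ (k - j - 1)) *ᵥ
            ((B - K * D) *ᵥ u (t + j) + K *ᵥ y (t + j)) := by
        rw [Matrix.mulVec_sum]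
        refine Finset.sum_congr rfl fun j hj => ?_
        have hj' := Finset.mem_range.1 hj
        rw [Matrix.mulVec_mulVec, ← pow_succ']
        congr 2
        omega
      have h3 : k + 1 - k - 1 = 0 := by omega
      rw [h1, Finset.sum_range_succ, h2, h3, pow_zero, Matrix.one_mulVec, pow_succ',
        ← Matrix.mulVec_mulVec, ih', Matrix.mulVec_add, add_assoc]
  have hk := key i le_rfl
  rw [hout (t + i) (by omega) le_rfl, hk, Matrix.mulVec_add]
  abel_nf
end

section
/- Let C ∈ ℝ^{n_y × m n_z} and D ∈ ℝ^{n_y × n_u} be one-step predictor matrices; define A, B, K from C and D by the shift construction; set 𝒜 = A − K C, ℬ = B − K D; build the observability and Markov-parameter matrices Φ^p, Φ^u, Φ^y from A, B, C, D, K with state dimension p = m n_z; and set P = (I − Φ^y)^{−1} Φ^p and F = (I − Φ^y)^{−1} Φ^u. Then for all vectors u(t−m),…,u(t+h−1) ∈ ℝ^{n_u}, y(t−m),…,y(t+h−1) ∈ ℝ^{n_y}, ε(t),…,ε(t+h−1) ∈ ℝ^{n_y}, with z_p(t+i) the stacked input/output histories for i = 0,…,h, u_f(t) = (u(t),…,u(t+h−1)),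 y_f(t) = (y(t),…,y(t+h−1)), ε_f(t) = (ε(t),…,ε(t+h−1)), and e_f(t) = (I − Φ^y)^{−1} ε_f(t), the trajectory predictor equation y_f(t) = P z_p(t) + F u_f(t) + e_f(t) holds if and only if, for every i = 0,…,h−1, both z_p(t+i+1) = A z_p(t+i) + B u(t+i) + K ε(t+i) and y(t+i) = C z_p(t+i) + D u(t+i) + ε(t+i) hold. -/
open Matrix Finset

/-- Stacked input/output history: `hist nu ny m u y i` is `z_p(t+i)`, the stack of
`z(i), …, z(i+m−1)` where `z(k) = (u(k), y(k))` (index `k` stands for time `t − m + k`). -/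
def hist (nu ny m : ℕ) (u : ℕ → Fin nu → ℝ) (y : ℕ → Fin ny → ℝ) (i : ℕ) :
    (Fin m × (Fin nu ⊕ Fin ny)) → ℝ :=
  fun pr => Sum.elim (u (i + (pr.1 : ℕ))) (y (i + (pr.1 : ℕ))) pr.2

/-- Shift construction: `A` has first `(m−1)n_z` rows `[0 I]`, next `n_u` rows zero, and
last `n_y` rows equal to `C`. -/
def shiftA (nu ny m : ℕ) (C : Matrix (Fin ny) (Fin m × (Fin nu ⊕ Fin ny)) ℝ) :
    Matrix (Fin m × (Fin nu ⊕ Fin ny)) (Fin m × (Fin nu ⊕ Fin ny)) ℝ :=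
  fun p q =>
    if hp : (p.1 : ℕ) + 1 < m then (if q = (⟨(p.1 : ℕ) + 1, hp⟩, p.2) then 1 else 0)
    else Sum.elim (fun _ : Fin nu => (0 : ℝ)) (fun b : Fin ny => C b q) p.2

/-- Shift construction: `B` is the vertical stack of `0`, `I_{n_u}`, and `D`. -/
def shiftB (nu ny m : ℕ) (D : Matrix (Fin ny) (Fin nu) ℝ) :
    Matrix (Fin m × (Fin nu ⊕ Fin ny)) (Fin nu) ℝ :=
  fun p a =>
    if (p.1 : ℕ) + 1 = m then
      Sum.elim (fun a' : Fin nu => if a' = a then (1 : ℝ) else 0) (fun b : Fin ny => D b a) p.2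
    else 0

/-- Shift construction: `K` is the vertical stack of `0` and `I_{n_y}`. -/
def shiftK (nu ny m : ℕ) : Matrix (Fin m × (Fin nu ⊕ Fin ny)) (Fin ny) ℝ :=
  fun p b =>
    if (p.1 : ℕ) + 1 = m then
      Sum.elim (fun _ : Fin nu => (0 : ℝ)) (fun b' : Fin ny => if b' = b then (1 : ℝ) else 0) p.2
    else 0

/-- Observability matrix `Φ^p`: vertical stack of `C`, `C𝒜`, …, `C𝒜^{h−1}`. -/
noncomputable def obsMat (σ : Type) (ny h : ℕ) (C : Matrix (Fin ny) σ ℝ)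
    (𝒜 : Matrix σ σ ℝ) [Fintype σ] [DecidableEq σ] : Matrix (Fin h × Fin ny) σ ℝ :=
  fun q k => (C * 𝒜 ^ (q.1 : ℕ)) q.2 k

/-- Markov-parameter matrix `Φ^u`: block lower triangular with diagonal blocks `D` and
`(i,j)` blocks `C 𝒜^{i−j−1} ℬ` for `i > j`. -/
noncomputable def markovU (σ : Type) (nu ny h : ℕ) (C : Matrix (Fin ny) σ ℝ)
    (𝒜 : Matrix σ σ ℝ) (ℬ : Matrix σ (Fin nu) ℝ) (D : Matrix (Fin ny) (Fin nu) ℝ)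
    [Fintype σ] [DecidableEq σ] : Matrix (Fin h × Fin ny) (Fin h × Fin nu) ℝ :=
  fun q r =>
    if (q.1 : ℕ) = (r.1 : ℕ) then D q.2 r.2
    else if (r.1 : ℕ) < (q.1 : ℕ) then (C * 𝒜 ^ ((q.1 : ℕ) - (r.1 : ℕ) - 1) * ℬ) q.2 r.2
    else 0

/-- Markov-parameter matrix `Φ^y`: strictly block lower triangular with
`(i,j)` blocks `C 𝒜^{i−j−1} K` for `i > j`. -/
noncomputable def markovY (σ : Type) (ny h : ℕ) (C : Matrix (Fin ny) σ ℝ)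
    (𝒜 : Matrix σ σ ℝ) (K : Matrix σ (Fin ny) ℝ) [Fintype σ] [DecidableEq σ] :
    Matrix (Fin h × Fin ny) (Fin h × Fin ny) ℝ :=
  fun q r =>
    if (r.1 : ℕ) < (q.1 : ℕ) then (C * 𝒜 ^ ((q.1 : ℕ) - (r.1 : ℕ) - 1) * K) q.2 r.2
    else 0

lemma aux_shift (nu ny m : ℕ) (hm : 0 < m)
    (C : Matrix (Fin ny) (Fin m × (Fin nu ⊕ Fin ny)) ℝ)
    (D : Matrix (Fin ny) (Fin nu) ℝ)
    (u : ℕ → Fin nu → ℝ) (y : ℕ → Fin ny → ℝ) (i : ℕ) (e : Fin ny → ℝ)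
    (he : y (m + i) = C *ᵥ hist nu ny m u y i + D *ᵥ u (m + i) + e) :
    hist nu ny m u y (i + 1) = shiftA nu ny m C *ᵥ hist nu ny m u y i
      + shiftB nu ny m D *ᵥ u (m + i) + shiftK nu ny m *ᵥ e := by
  funext p
  obtain ⟨k, s⟩ := p
  simp only [Pi.add_apply]
  by_cases hk : (k : ℕ) + 1 < m
  · have hk' : ¬ ((k : ℕ) + 1 = m) := by omega
    have e1 : i + 1 + (k : ℕ) = i + (k + 1) := by omega
    simp [Matrix.mulVec, dotProduct, shiftA, shiftB, shiftK, hk, hk', hist, e1]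
  · have hk' : ((k : ℕ) + 1 = m) := by omega
    have e1 : i + 1 + (k : ℕ) = m + i := by omega
    cases s with
    | inl a => simp [Matrix.mulVec, dotProduct, shiftA, shiftB, shiftK, hk', hist, e1]
    | inr b =>
      have := congrFun he b
      simp only [hist, e1, Sum.elim_inr]
      rw [this]
      simp [Matrix.mulVec, dotProduct, shiftA, shiftB, shiftK, hk']

lemma aux_shift' (nu ny m : ℕ) (hm : 0 < m)
    (C : Matrix (Fin ny) (Fin m × (Fin nu ⊕ Fin ny)) ℝ)
    (D : Matrix (Fin ny) (Fin nu) ℝ)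
    (u : ℕ → Fin nu → ℝ) (y : ℕ → Fin ny → ℝ) (i : ℕ) :
    hist nu ny m u y (i + 1) =
      (shiftA nu ny m C - shiftK nu ny m * C) *ᵥ hist nu ny m u y i
      + (shiftB nu ny m D - shiftK nu ny m * D) *ᵥ u (m + i)
      + shiftK nu ny m *ᵥ y (m + i) := by
  rw [aux_shift nu ny m hm C D u y i
    (y (m + i) - C *ᵥ hist nu ny m u y i - D *ᵥ u (m + i)) (by abel)]
  simp only [Matrix.sub_mulVec, Matrix.mulVec_sub, Matrix.mulVec_mulVec]
  abel

lemma aux_sum {n h : ℕ} (q : Fin h) (f : ℕ → Fin n → ℝ) :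
    (∑ r : Fin h × Fin n, if (r.1 : ℕ) < (q : ℕ) then f r.1 r.2 else 0)
      = ∑ j ∈ range (q : ℕ), ∑ b, f j b := by
  rw [Fintype.sum_prod_type]
  rw [Fin.sum_univ_eq_sum_range (fun j => ∑ b, if j < (q : ℕ) then f j b else 0) h]
  have hs : range (q : ℕ) ⊆ range h := Finset.range_subset_range.2 q.2.le
  rw [← Finset.sum_subset hs]
  · refine Finset.sum_congr rfl fun j hj => ?_
    simp [Finset.mem_range.1 hj]
  · intro j _ hj
    have : ¬ j < (q : ℕ) := fun h => hj (Finset.mem_range.2 h)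
    simp [this]

lemma aux_Y {σ : Type} [Fintype σ] [DecidableEq σ] {ny h : ℕ} (C : Matrix (Fin ny) σ ℝ)
    (A : Matrix σ σ ℝ) (K : Matrix σ (Fin ny) ℝ) (y : ℕ → Fin ny → ℝ) (q : Fin h × Fin ny) :
    (markovY σ ny h C A K *ᵥ (fun r => y (r.1 : ℕ) r.2)) q
      = (C *ᵥ ∑ j ∈ range (q.1 : ℕ), A ^ ((q.1 : ℕ) - j - 1) *ᵥ (K *ᵥ y j)) q.2 := by
  rw [Matrix.mulVec_sum, Finset.sum_apply]
  simp only [Matrix.mulVec_mulVec, ← Matrix.mul_assoc]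
  have := aux_sum q.1 (fun j b => (C * A ^ ((q.1 : ℕ) - j - 1) * K) q.2 b * y j b)
  simp only [Matrix.mulVec, dotProduct] at this ⊢
  rw [← this]
  simp only [markovY, ite_mul, zero_mul]

lemma aux_U {σ : Type} [Fintype σ] [DecidableEq σ] {nu ny h : ℕ} (C : Matrix (Fin ny) σ ℝ)
    (A : Matrix σ σ ℝ) (B : Matrix σ (Fin nu) ℝ) (D : Matrix (Fin ny) (Fin nu) ℝ)
    (u : ℕ → Fin nu → ℝ) (q : Fin h × Fin ny) :
    (markovU σ nu ny h C A B D *ᵥ (fun r => u (r.1 : ℕ) r.2)) q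
      = (C *ᵥ ∑ j ∈ range (q.1 : ℕ), A ^ ((q.1 : ℕ) - j - 1) *ᵥ (B *ᵥ u j)) q.2
        + (D *ᵥ u q.1) q.2 := by
  rw [Matrix.mulVec_sum, Finset.sum_apply]
  simp only [Matrix.mulVec_mulVec, ← Matrix.mul_assoc]
  have := aux_sum q.1 (fun j b => (C * A ^ ((q.1 : ℕ) - j - 1) * B) q.2 b * u j b)
  have h2 : (∑ r : Fin h × Fin nu, if q.1 = r.1 then D q.2 r.2 * u r.1 r.2 else 0)
      = (D *ᵥ u q.1) q.2 := by
    rw [Fintype.sum_prod_type, Finset.sum_eq_single q.1]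
    · simp [Matrix.mulVec, dotProduct]
    · intro b _ hb
      simp [hb.symm]
    · simp
  rw [← h2]
  simp only [Matrix.mulVec, dotProduct] at this ⊢
  rw [← this, ← Finset.sum_add_distrib]
  refine Finset.sum_congr rfl fun r _ => ?_
  simp only [markovU, Fin.ext_iff]
  by_cases hqr : (q.1 : ℕ) = r.1
  · simp [hqr]
  · simp [hqr]

lemma aux_unit {σ : Type} [Fintype σ] [DecidableEq σ] {ny h : ℕ} (C : Matrix (Fin ny) σ ℝ)
    (A : Matrix σ σ ℝ) (K : Matrix σ (Fin ny) ℝ) :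
    IsUnit (1 - markovY σ ny h C A K) := by
  rw [← Matrix.mulVec_injective_iff_isUnit]
  intro v w hvw
  have h0 : v - w = markovY σ ny h C A K *ᵥ (v - w) := by
    have : (1 - markovY σ ny h C A K) *ᵥ (v - w) = 0 := by
      rw [Matrix.mulVec_sub]; exact sub_eq_zero.2 hvw
    rw [Matrix.sub_mulVec, Matrix.one_mulVec] at this
    exact sub_eq_zero.1 this
  have key : ∀ n : ℕ, ∀ q : Fin h × Fin ny, (q.1 : ℕ) = n → (v - w) q = 0 := by
    intro n
    induction n using Nat.strong_induction_on with
    | _ n ih =>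
      intro q hq
      rw [h0]
      simp only [Matrix.mulVec, dotProduct]
      refine Finset.sum_eq_zero fun r _ => ?_
      by_cases hr : (r.1 : ℕ) < q.1
      · rw [ih r.1 (hq ▸ hr) r rfl, mul_zero]
      · simp [markovY, hr]
  funext q
  exact sub_eq_zero.1 (key _ q rfl)

lemma aux_traj {σ : Type} [Fintype σ] [DecidableEq σ] {nu ny : ℕ}
    (A : Matrix σ σ ℝ) (B : Matrix σ (Fin nu) ℝ) (K : Matrix σ (Fin ny) ℝ)
    (z : ℕ → σ → ℝ) (u : ℕ → Fin nu → ℝ) (y : ℕ → Fin ny → ℝ)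
    (hz : ∀ i, z (i + 1) = A *ᵥ z i + B *ᵥ u i + K *ᵥ y i) (i : ℕ) :
    z i = A ^ i *ᵥ z 0 + (∑ j ∈ range i, A ^ (i - j - 1) *ᵥ (B *ᵥ u j))
      + ∑ j ∈ range i, A ^ (i - j - 1) *ᵥ (K *ᵥ y j) := by
  induction i with
  | zero => simp
  | succ i ih =>
    have st : ∀ w : ℕ → σ → ℝ, ∑ j ∈ range (i + 1), A ^ (i + 1 - j - 1) *ᵥ w j
        = A *ᵥ (∑ j ∈ range i, A ^ (i - j - 1) *ᵥ w j) + w i := by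
      intro w
      rw [Finset.sum_range_succ, Matrix.mulVec_sum]
      congr 1
      · refine Finset.sum_congr rfl fun j hj => ?_
        have := Finset.mem_range.1 hj
        rw [Matrix.mulVec_mulVec, ← pow_succ']
        congr 2
        omega
      · simp
    rw [hz, st, st]
    nth_rewrite 1 [ih]
    rw [Matrix.mulVec_add, Matrix.mulVec_add, Matrix.mulVec_mulVec, ← pow_succ']
    abel

/-- **Theorem 1.** With the state-space predictor `P = (I−Φ^y)⁻¹ Φ^p`,
`F = (I−Φ^y)⁻¹ Φ^u` built from the one-step fit `C, D` via the shift construction, and with the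
index `k` of `u, y` standing for time `t − m + k` and the index `k` of `ε` standing for time
`t + k`, the trajectory predictor equation `y_f(t) = P z_p(t) + F u_f(t) + e_f(t)` with
`e_f(t) = (I−Φ^y)⁻¹ ε_f(t)` holds if and only if the state-space equations
`z_p(t+i+1) = A z_p(t+i) + B u(t+i) + K ε(t+i)` and `y(t+i) = C z_p(t+i) + D u(t+i) + ε(t+i)`
hold for `i = 0, …, h−1`. -/
theorem state_space_predictor_iff_state_space
    (nu ny m h : ℕ) (hnu : 0 < nu) (hny : 0 < ny) (hm : 0 < m) (hh : 0 < h)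
    (C : Matrix (Fin ny) (Fin m × (Fin nu ⊕ Fin ny)) ℝ)
    (D : Matrix (Fin ny) (Fin nu) ℝ)
    (u : ℕ → Fin nu → ℝ) (y : ℕ → Fin ny → ℝ) (ε : ℕ → Fin ny → ℝ) :
    letI A := shiftA nu ny m C
    letI B := shiftB nu ny m D
    letI K := shiftK nu ny m
    letI 𝒜 := A - K * C
    letI ℬ := B - K * D
    letI Φp := obsMat (Fin m × (Fin nu ⊕ Fin ny)) ny h C 𝒜
    letI Φu := markovU (Fin m × (Fin nu ⊕ Fin ny)) nu ny h C 𝒜 ℬ D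
    letI Φy := markovY (Fin m × (Fin nu ⊕ Fin ny)) ny h C 𝒜 K
    letI P := (1 - Φy)⁻¹ * Φp
    letI F := (1 - Φy)⁻¹ * Φu
    letI uf : Fin h × Fin nu → ℝ := fun r => u (m + (r.1 : ℕ)) r.2
    letI yf : Fin h × Fin ny → ℝ := fun q => y (m + (q.1 : ℕ)) q.2
    letI εf : Fin h × Fin ny → ℝ := fun q => ε (q.1 : ℕ) q.2
    letI ef := (1 - Φy)⁻¹ *ᵥ εf
    ((yf = P *ᵥ hist nu ny m u y 0 + F *ᵥ uf + ef)
    ↔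
    (∀ i : ℕ, i < h →
      (hist nu ny m u y (i + 1) =
          A *ᵥ hist nu ny m u y i + B *ᵥ u (m + i) + K *ᵥ ε i ∧
        y (m + i) = C *ᵥ hist nu ny m u y i + D *ᵥ u (m + i) + ε i))) := by
  let A := shiftA nu ny m C
  let B := shiftB nu ny m D
  let K := shiftK nu ny m
  let 𝒜 := A - K * C
  let ℬ := B - K * D
  let Φp := obsMat (Fin m × (Fin nu ⊕ Fin ny)) ny h C 𝒜
  let Φu := markovU (Fin m × (Fin nu ⊕ Fin ny)) nu ny h C 𝒜 ℬ D
  let Φy := markovY (Fin m × (Fin nu ⊕ Fin ny)) ny h C 𝒜 K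
  let P := (1 - Φy)⁻¹ * Φp
  let F := (1 - Φy)⁻¹ * Φu
  let uf : Fin h × Fin nu → ℝ := fun r => u (m + (r.1 : ℕ)) r.2
  let yf : Fin h × Fin ny → ℝ := fun q => y (m + (q.1 : ℕ)) q.2
  let εf : Fin h × Fin ny → ℝ := fun q => ε (q.1 : ℕ) q.2
  let ef := (1 - Φy)⁻¹ *ᵥ εf
  change (yf = P *ᵥ hist nu ny m u y 0 + F *ᵥ uf + ef) ↔ _
  have hU : IsUnit (1 - Φy) := aux_unit C 𝒜 K
  have hdet : IsUnit (1 - Φy).det := (Matrix.isUnit_iff_isUnit_det _).1 hU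
  have htr := aux_traj 𝒜 ℬ K (hist nu ny m u y) (fun i => u (m + i)) (fun i => y (m + i))
    (fun i => aux_shift' nu ny m hm C D u y i)
  have hrow : ∀ q : Fin h × Fin ny,
      (Φp *ᵥ hist nu ny m u y 0) q + (Φu *ᵥ uf) q + (Φy *ᵥ yf) q
        = (C *ᵥ hist nu ny m u y q.1) q.2 + (D *ᵥ u (m + q.1)) q.2 := by
    intro q
    have h1 : (Φp *ᵥ hist nu ny m u y 0) q
        = (C *ᵥ (𝒜 ^ (q.1 : ℕ) *ᵥ hist nu ny m u y 0)) q.2 := by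
      rw [Matrix.mulVec_mulVec]; rfl
    have h2 := aux_U C 𝒜 ℬ D (fun i => u (m + i)) q
    have h3 := aux_Y C 𝒜 K (fun i => y (m + i)) q
    rw [htr q.1, Matrix.mulVec_add, Matrix.mulVec_add, Pi.add_apply, Pi.add_apply, h1]
    change _ + (markovU _ nu ny h C 𝒜 ℬ D *ᵥ _) q + (markovY _ ny h C 𝒜 K *ᵥ _) q = _
    rw [h2, h3]
    ring
  have hiff : (yf = P *ᵥ hist nu ny m u y 0 + F *ᵥ uf + ef) ↔
      yf = Φp *ᵥ hist nu ny m u y 0 + Φu *ᵥ uf + Φy *ᵥ yf + εf := by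
    have e1 : P *ᵥ hist nu ny m u y 0 + F *ᵥ uf + ef
        = (1 - Φy)⁻¹ *ᵥ (Φp *ᵥ hist nu ny m u y 0 + Φu *ᵥ uf + εf) := by
      simp only [P, F, ef, Matrix.mulVec_add, Matrix.mulVec_mulVec]
    rw [e1]
    constructor
    · intro hy
      have h2 : (1 - Φy) *ᵥ yf = Φp *ᵥ hist nu ny m u y 0 + Φu *ᵥ uf + εf := by
        rw [hy, Matrix.mulVec_mulVec, Matrix.mul_nonsing_inv _ hdet, Matrix.one_mulVec]
      rw [Matrix.sub_mulVec, Matrix.one_mulVec, sub_eq_iff_eq_add] at h2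
      refine h2.trans ?_
      abel
    · intro hy
      have h2 : (1 - Φy) *ᵥ yf = Φp *ᵥ hist nu ny m u y 0 + Φu *ᵥ uf + εf := by
        rw [Matrix.sub_mulVec, Matrix.one_mulVec, sub_eq_iff_eq_add]
        refine hy.trans ?_
        abel
      rw [← h2, Matrix.mulVec_mulVec, Matrix.nonsing_inv_mul _ hdet, Matrix.one_mulVec]
  rw [hiff]
  constructor
  · intro hy i hi
    have h2 : y (m + i) = C *ᵥ hist nu ny m u y i + D *ᵥ u (m + i) + ε i := by
      funext b
      have h3 := congrFun hy (⟨i, hi⟩, b)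
      simp only [Pi.add_apply] at h3
      rw [hrow] at h3
      exact h3
    exact ⟨aux_shift nu ny m hm C D u y i (ε i) h2, h2⟩
  · intro hs
    funext q
    simp only [Pi.add_apply]
    rw [hrow]
    exact congrFun (hs q.1 q.1.2).2 q.2
end

section
/- Suppose Z̃ = L₁₁ Q₁, Ũ = L₂₁ Q₁ + L₂₂ Q₂, and Ỹ = L₃₁ Q₁ + L₃₂ Q₂ + L₃₃ Q₃, where L₁₁ ∈ ℝ^{m n_z × m n_z} is invertible, L₂₂ ∈ ℝ^{h n_u × h n_u} is invertible and block lower triangular in h×h blocks of size n_u × n_u, L₂₁ ∈ ℝ^{h n_u × m n_z}, L₃₁ ∈ ℝ^{h n_y × m n_z}, L₃₂ ∈ ℝ^{h n_y × h n_u}, L₃₃ ∈ ℝ^{h n_y × h n_y}, and Q₁, Q₂, Q₃ have orthonormal rows with Q_i Q_iᵀ = I and Q_i Q_jᵀ = 0 for i ≠ j. Let BLT(L₃₂) denote L₃₂ with its (i,j) blocks (of size n_y × n_u) replaced by zero for all j > i, and define F_mlt = BLT(L₃₂) L₂₂^{−1} and P_mlt = (L₃₁ − F_mlt L₂₁) L₁₁^{−1}.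 Then F_mlt is block lower triangular, and (P_mlt, F_mlt) is the unique minimizer of ‖Ỹ − P Z̃ − F Ũ‖_Fro² over all P ∈ ℝ^{h n_y × m n_z} and all block-lower-triangular F ∈ ℝ^{h n_y × h n_u}. -/
open Matrix Finset

/-- A matrix in `ℝ^{h n_y × h n_u}` (blocks of size `n_y × n_u`) is block lower triangular if
its `(i,j)` block is zero whenever `j > i`. -/
def BLTyu (nu ny h : ℕ) (F : Matrix (Fin h × Fin ny) (Fin h × Fin nu) ℝ) : Prop :=
  ∀ p : Fin h × Fin ny, ∀ q : Fin h × Fin nu, (p.1 : ℕ) < (q.1 : ℕ) → F p q = 0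

/-- A matrix in `ℝ^{h n_u × h n_u}` (blocks of size `n_u × n_u`) is block lower triangular if
its `(i,j)` block is zero whenever `j > i`. -/
def BLTuu (nu h : ℕ) (L : Matrix (Fin h × Fin nu) (Fin h × Fin nu) ℝ) : Prop :=
  ∀ p q : Fin h × Fin nu, (p.1 : ℕ) < (q.1 : ℕ) → L p q = 0

/-- `BLT(L₃₂)`: zero out the strictly block upper triangular part of `L₃₂`. -/
def bltOf (nu ny h : ℕ) (L : Matrix (Fin h × Fin ny) (Fin h × Fin nu) ℝ) :
    Matrix (Fin h × Fin ny) (Fin h × Fin nu) ℝ :=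
  fun p q => if (p.1 : ℕ) < (q.1 : ℕ) then 0 else L p q

lemma aux_trace_sq {α β : Type*} [Fintype α] [Fintype β] (A : Matrix α β ℝ) :
    Matrix.trace (A * Aᵀ) = ∑ i, ∑ j, A i j ^ 2 := by
  simp [Matrix.trace, Matrix.mul_apply, pow_two]

lemma aux_trace_nonneg {α β : Type*} [Fintype α] [Fintype β] (A : Matrix α β ℝ) :
    0 ≤ Matrix.trace (A * Aᵀ) := by
  rw [aux_trace_sq]; positivity

lemma aux_trace_zero {α β : Type*} [Fintype α] [Fintype β] (A : Matrix α β ℝ)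
    (h : Matrix.trace (A * Aᵀ) = 0) : A = 0 := by
  rw [aux_trace_sq] at h
  ext i j
  rw [Finset.sum_eq_zero_iff_of_nonneg (fun i _ => by positivity)] at h
  have h1 := h i (Finset.mem_univ i)
  rw [Finset.sum_eq_zero_iff_of_nonneg (fun i _ => by positivity)] at h1
  simpa using h1 j (Finset.mem_univ j)

lemma aux_pyth {a b c d n : Type*} [Fintype a] [Fintype b] [Fintype c] [Fintype d] [Fintype n]
    [DecidableEq a] [DecidableEq b] [DecidableEq c]
    (A : Matrix d a ℝ) (B : Matrix d b ℝ) (C : Matrix d c ℝ)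
    (Q1 : Matrix a n ℝ) (Q2 : Matrix b n ℝ) (Q3 : Matrix c n ℝ)
    (hQ11 : Q1 * Q1ᵀ = 1) (hQ22 : Q2 * Q2ᵀ = 1) (hQ33 : Q3 * Q3ᵀ = 1)
    (hQ12 : Q1 * Q2ᵀ = 0) (hQ13 : Q1 * Q3ᵀ = 0) (hQ23 : Q2 * Q3ᵀ = 0)
    (hQ21 : Q2 * Q1ᵀ = 0) (hQ31 : Q3 * Q1ᵀ = 0) (hQ32 : Q3 * Q2ᵀ = 0) :
    Matrix.trace ((A * Q1 + B * Q2 + C * Q3)ᵀ * (A * Q1 + B * Q2 + C * Q3)) =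
      Matrix.trace (A * Aᵀ) + Matrix.trace (B * Bᵀ) + Matrix.trace (C * Cᵀ) := by
  rw [Matrix.trace_mul_comm]
  have e : (A * Q1 + B * Q2 + C * Q3) * (A * Q1 + B * Q2 + C * Q3)ᵀ =
      A * Aᵀ + B * Bᵀ + C * Cᵀ := by
    simp only [Matrix.transpose_add, Matrix.transpose_mul, Matrix.add_mul, Matrix.mul_add]
    rw [show A * Q1 * (Q1ᵀ * Aᵀ) = A * (Q1 * Q1ᵀ) * Aᵀ by simp only [Matrix.mul_assoc],
      show A * Q1 * (Q2ᵀ * Bᵀ) = A * (Q1 * Q2ᵀ) * Bᵀ by simp only [Matrix.mul_assoc],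
      show A * Q1 * (Q3ᵀ * Cᵀ) = A * (Q1 * Q3ᵀ) * Cᵀ by simp only [Matrix.mul_assoc],
      show B * Q2 * (Q1ᵀ * Aᵀ) = B * (Q2 * Q1ᵀ) * Aᵀ by simp only [Matrix.mul_assoc],
      show B * Q2 * (Q2ᵀ * Bᵀ) = B * (Q2 * Q2ᵀ) * Bᵀ by simp only [Matrix.mul_assoc],
      show B * Q2 * (Q3ᵀ * Cᵀ) = B * (Q2 * Q3ᵀ) * Cᵀ by simp only [Matrix.mul_assoc],
      show C * Q3 * (Q1ᵀ * Aᵀ) = C * (Q3 * Q1ᵀ) * Aᵀ by simp only [Matrix.mul_assoc],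
      show C * Q3 * (Q2ᵀ * Bᵀ) = C * (Q3 * Q2ᵀ) * Bᵀ by simp only [Matrix.mul_assoc],
      show C * Q3 * (Q3ᵀ * Cᵀ) = C * (Q3 * Q3ᵀ) * Cᵀ by simp only [Matrix.mul_assoc],
      hQ11, hQ12, hQ13, hQ21, hQ22, hQ23, hQ31, hQ32, hQ33]
    simp
  rw [e]; simp [Matrix.trace_add]

lemma aux_mul_blt (nu ny h : ℕ) (F : Matrix (Fin h × Fin ny) (Fin h × Fin nu) ℝ)
    (L : Matrix (Fin h × Fin nu) (Fin h × Fin nu) ℝ) (hF : BLTyu nu ny h F)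
    (hL : BLTuu nu h L) : BLTyu nu ny h (F * L) := by
  intro p q hpq
  rw [Matrix.mul_apply]
  apply Finset.sum_eq_zero
  intro r _
  by_cases hr : (p.1 : ℕ) < (r.1 : ℕ)
  · rw [hF p r hr, zero_mul]
  · rw [hL r q (by omega), mul_zero]

lemma aux_inv_blt (nu h : ℕ) (L : Matrix (Fin h × Fin nu) (Fin h × Fin nu) ℝ)
    (hu : IsUnit L) (hL : BLTuu nu h L) : BLTuu nu h L⁻¹ := by
  haveI := hu.invertible
  have hb : L.BlockTriangular (fun p => OrderDual.toDual p.1) := fun p q hpq => hL p q hpq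
  have := Matrix.blockTriangular_inv_of_blockTriangular hb
  exact fun p q hpq => this hpq

/-- Given an LQ decomposition with `L₁₁` invertible and `L₂₂` invertible and
block lower triangular, the multistep predictor `F_mlt = BLT(L₃₂) L₂₂⁻¹`,
`P_mlt = (L₃₁ − F_mlt L₂₁) L₁₁⁻¹` has `F_mlt` block lower triangular and `(P_mlt, F_mlt)` is
the unique minimizer of `‖Ỹ − P Z̃ − F Ũ‖_Fro²` over all `P` and all block-lower-triangular
`F`. -/
theorem multistep_predictor_constrained_least_squares
    (nu ny m h n : ℕ) (hnu : 0 < nu) (hny : 0 < ny) (hm : 0 < m) (hh : 0 < h)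
    (hn : m * (nu + ny) + h * nu + h * ny ≤ n)
    (L11 : Matrix (Fin m × (Fin nu ⊕ Fin ny)) (Fin m × (Fin nu ⊕ Fin ny)) ℝ)
    (L21 : Matrix (Fin h × Fin nu) (Fin m × (Fin nu ⊕ Fin ny)) ℝ)
    (L22 : Matrix (Fin h × Fin nu) (Fin h × Fin nu) ℝ)
    (L31 : Matrix (Fin h × Fin ny) (Fin m × (Fin nu ⊕ Fin ny)) ℝ)
    (L32 : Matrix (Fin h × Fin ny) (Fin h × Fin nu) ℝ)
    (L33 : Matrix (Fin h × Fin ny) (Fin h × Fin ny) ℝ)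
    (Q1 : Matrix (Fin m × (Fin nu ⊕ Fin ny)) (Fin n) ℝ)
    (Q2 : Matrix (Fin h × Fin nu) (Fin n) ℝ)
    (Q3 : Matrix (Fin h × Fin ny) (Fin n) ℝ)
    (hL11 : IsUnit L11) (hL22 : IsUnit L22) (hL22blt : BLTuu nu h L22)
    (hQ11 : Q1 * Q1ᵀ = 1) (hQ22 : Q2 * Q2ᵀ = 1) (hQ33 : Q3 * Q3ᵀ = 1)
    (hQ12 : Q1 * Q2ᵀ = 0) (hQ13 : Q1 * Q3ᵀ = 0) (hQ23 : Q2 * Q3ᵀ = 0)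
    (hQ21 : Q2 * Q1ᵀ = 0) (hQ31 : Q3 * Q1ᵀ = 0) (hQ32 : Q3 * Q2ᵀ = 0)
    (Z : Matrix (Fin m × (Fin nu ⊕ Fin ny)) (Fin n) ℝ)
    (U : Matrix (Fin h × Fin nu) (Fin n) ℝ)
    (Y : Matrix (Fin h × Fin ny) (Fin n) ℝ)
    (hZ : Z = L11 * Q1) (hU : U = L21 * Q1 + L22 * Q2)
    (hY : Y = L31 * Q1 + L32 * Q2 + L33 * Q3) :
    letI Fmlt := bltOf nu ny h L32 * L22⁻¹
    letI Pmlt := (L31 - Fmlt * L21) * L11⁻¹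
    (BLTyu nu ny h Fmlt ∧
      ∀ (P : Matrix (Fin h × Fin ny) (Fin m × (Fin nu ⊕ Fin ny)) ℝ)
        (F : Matrix (Fin h × Fin ny) (Fin h × Fin nu) ℝ),
        BLTyu nu ny h F → (P, F) ≠ (Pmlt, Fmlt) →
        Matrix.trace ((Y - Pmlt * Z - Fmlt * U)ᵀ * (Y - Pmlt * Z - Fmlt * U)) <
        Matrix.trace ((Y - P * Z - F * U)ᵀ * (Y - P * Z - F * U))) := by
  have hb0 : BLTyu nu ny h (bltOf nu ny h L32) := by
    intro p q hpq
    simp [bltOf, hpq]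
  have hd1 : IsUnit L11.det := (Matrix.isUnit_iff_isUnit_det _).1 hL11
  have hd2 : IsUnit L22.det := (Matrix.isUnit_iff_isUnit_det _).1 hL22
  refine ⟨aux_mul_blt nu ny h _ _ hb0 (aux_inv_blt nu h L22 hL22 hL22blt), ?_⟩
  have res : ∀ (P : Matrix (Fin h × Fin ny) (Fin m × (Fin nu ⊕ Fin ny)) ℝ)
      (F : Matrix (Fin h × Fin ny) (Fin h × Fin nu) ℝ),
      Matrix.trace ((Y - P * Z - F * U)ᵀ * (Y - P * Z - F * U)) =
      Matrix.trace ((L31 - P * L11 - F * L21) * (L31 - P * L11 - F * L21)ᵀ) +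
      Matrix.trace ((L32 - F * L22) * (L32 - F * L22)ᵀ) + Matrix.trace (L33 * L33ᵀ) := by
    intro P F
    rw [← aux_pyth _ _ _ Q1 Q2 Q3 hQ11 hQ22 hQ33 hQ12 hQ13 hQ23 hQ21 hQ31 hQ32]
    have e : Y - P * Z - F * U =
        (L31 - P * L11 - F * L21) * Q1 + (L32 - F * L22) * Q2 + L33 * Q3 := by
      subst hZ hU hY
      simp only [Matrix.sub_mul, Matrix.mul_add, Matrix.mul_assoc]
      abel
    rw [e]
  intro P F hF hne
  rw [res, res]
  have hF2 : bltOf nu ny h L32 * L22⁻¹ * L22 = bltOf nu ny h L32 :=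
    Matrix.nonsing_inv_mul_cancel_right _ _ hd2
  have hP : ∀ X : Matrix (Fin h × Fin ny) (Fin m × (Fin nu ⊕ Fin ny)) ℝ, X * L11⁻¹ * L11 = X :=
    fun X => Matrix.nonsing_inv_mul_cancel_right _ _ hd1
  rw [hF2, hP]
  have hz : L31 - (L31 - bltOf nu ny h L32 * L22⁻¹ * L21) - bltOf nu ny h L32 * L22⁻¹ * L21 = 0 := by
    abel
  rw [hz]
  have hE : BLTyu nu ny h (bltOf nu ny h L32 - F * L22) := by
    intro p q hpq
    rw [Matrix.sub_apply, hb0 p q hpq, aux_mul_blt nu ny h _ _ hF hL22blt p q hpq, sub_zero]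
  have hsplit : Matrix.trace ((L32 - F * L22) * (L32 - F * L22)ᵀ) =
      Matrix.trace ((L32 - bltOf nu ny h L32) * (L32 - bltOf nu ny h L32)ᵀ) +
      Matrix.trace ((bltOf nu ny h L32 - F * L22) * (bltOf nu ny h L32 - F * L22)ᵀ) := by
    rw [aux_trace_sq, aux_trace_sq, aux_trace_sq, ← Finset.sum_add_distrib]
    refine Finset.sum_congr rfl fun p _ => ?_
    rw [← Finset.sum_add_distrib]
    refine Finset.sum_congr rfl fun q _ => ?_
    by_cases hpq : (p.1 : ℕ) < (q.1 : ℕ)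
    · have h1 := hE p q hpq
      have h2 := aux_mul_blt nu ny h _ _ hF hL22blt p q hpq
      have h3 := hb0 p q hpq
      rw [h1]
      simp only [Matrix.sub_apply, h2, h3]
      ring
    · have h3 : bltOf nu ny h L32 p q = L32 p q := by simp [bltOf, hpq]
      simp only [Matrix.sub_apply, h3]
      ring
  rw [hsplit]
  have n1 := aux_trace_nonneg (L31 - P * L11 - F * L21)
  have n2 := aux_trace_nonneg (bltOf nu ny h L32 - F * L22)
  by_contra hcon
  simp only [Matrix.zero_mul, Matrix.trace_zero, zero_add] at hcon
  have z1 := aux_trace_zero (L31 - P * L11 - F * L21) (by linarith)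
  have z2 := aux_trace_zero (bltOf nu ny h L32 - F * L22) (by linarith)
  apply hne
  have f : F = bltOf nu ny h L32 * L22⁻¹ := by
    rw [sub_eq_zero.1 z2, Matrix.mul_nonsing_inv_cancel_right _ _ hd2]
  have g : P = (L31 - F * L21) * L11⁻¹ := by
    have : L31 - F * L21 = P * L11 := by
      rw [← sub_eq_zero, ← z1]; abel
    rw [this, Matrix.mul_nonsing_inv_cancel_right _ _ hd1]
  rw [← f, ← g]
end

section
/- Let Q ∈ ℝ^{s×s} be symmetric positive definite, let λ > 0, and let F ∈ ℝ^{s×r} have full column rank. Then the block matrix [[Fᵀ Q F, Fᵀ Q], [Q F, Q + λ I_s]] ∈ ℝ^{(r+s)×(r+s)} is invertible. -/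
open Matrix Finset

/-- For `Q` symmetric positive definite, `λ > 0`, and `F` of full column
rank, the block matrix `[[Fᵀ Q F, Fᵀ Q], [Q F, Q + λ I]]` is invertible. -/
theorem relax_and_regularize_block_matrix_invertible
    (r s : ℕ) (hr : 0 < r) (hs : 0 < s) (hrs : r ≤ s)
    (Q : Matrix (Fin s) (Fin s) ℝ) (hQ : Q.PosDef)
    (lam : ℝ) (hlam : 0 < lam)
    (F : Matrix (Fin s) (Fin r) ℝ)
    (hF : ∀ u : Fin r → ℝ, F *ᵥ u = 0 → u = 0) :
    IsUnit (Matrix.fromBlocks (Fᵀ * Q * F) (Fᵀ * Q) (Q * F) (Q + lam • (1 : Matrix (Fin s) (Fin s) ℝ))) := by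
  rw [← Matrix.mulVec_injective_iff_isUnit]
  rw [← Matrix.coe_mulVecLin, injective_iff_map_eq_zero]
  intro x hx
  rw [Matrix.mulVecLin_apply, Matrix.fromBlocks_mulVec] at hx
  obtain ⟨u, hu⟩ : ∃ u, u = x ∘ Sum.inl := ⟨_, rfl⟩
  obtain ⟨v, hv⟩ : ∃ v, v = x ∘ Sum.inr := ⟨_, rfl⟩
  rw [← hu, ← hv] at hx
  have h1 : Fᵀ *ᵥ (Q *ᵥ (F *ᵥ u + v)) = 0 := by
    funext i
    have := congrFun hx (Sum.inl i)
    simpa [Matrix.mulVec_add, Matrix.mulVec_mulVec, Matrix.mul_assoc] using this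
  have h2 : Q *ᵥ (F *ᵥ u + v) + lam • v = 0 := by
    funext i
    have := congrFun hx (Sum.inr i)
    simpa [Matrix.mulVec_add, Matrix.add_mulVec, Matrix.smul_mulVec, Matrix.mulVec_mulVec,
      add_assoc] using this
  obtain ⟨w, hw⟩ : ∃ w, w = F *ᵥ u + v := ⟨_, rfl⟩
  rw [← hw] at h1 h2
  have h3 : (F *ᵥ u) ⬝ᵥ (Q *ᵥ w) = 0 := by
    rw [← Matrix.vecMul_transpose, ← Matrix.dotProduct_mulVec, h1, dotProduct_zero]
  have h4 : v ⬝ᵥ (Q *ᵥ w) + lam * (v ⬝ᵥ v) = 0 := by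
    have := congrArg (fun z => v ⬝ᵥ z) h2
    simpa [dotProduct_add, dotProduct_smul] using this
  have h5 : w ⬝ᵥ (Q *ᵥ w) = - (lam * (v ⬝ᵥ v)) := by
    have : w ⬝ᵥ (Q *ᵥ w) = (F *ᵥ u) ⬝ᵥ (Q *ᵥ w) + v ⬝ᵥ (Q *ᵥ w) := by
      rw [← add_dotProduct, ← hw]
    linarith
  have hvv : 0 ≤ v ⬝ᵥ v := Finset.sum_nonneg fun i _ => mul_self_nonneg _
  have hw0 : w = 0 := by
    by_contra hne
    have := hQ.dotProduct_mulVec_pos hne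
    rw [star_trivial] at this
    nlinarith [mul_nonneg hlam.le hvv]
  have hv0 : v = 0 := by
    rw [hw0, Matrix.mulVec_zero, zero_add] at h2
    exact (smul_eq_zero.mp h2).resolve_left hlam.ne'
  have hu0 : u = 0 := by
    apply hF
    rw [hw0, hv0, add_zero] at hw
    exact hw.symm
  funext i
  cases i with
  | inl i => exact (congrFun hu i).symm.trans (congrFun hu0 i)
  | inr i => exact (congrFun hv i).symm.trans (congrFun hv0 i)
end
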